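/- Let G be a simple graph, let π be an almost equitable partition of G with characteristic matrix P_π and quotient Laplacian L_π, and let ρ be an almost equitable partition of the quotient graph G_π with characteristic matrix P_ρ. If ρ is π-regular, then the kernel of P_ρ^T is L_π-invariant; that is, for every vector x with P_ρ^T x = 0, also P_ρ^T (L_π x) = 0. -/

import Mathlib

open Classical Matrix

noncomputable def lap {n : ℕ} (G : SimpleGraph (Fin n)) : Matrix (Fin n) (Fin n) ℝ :=
  Matrix.of fun i j =>
    (if i = j then ((G.neighborSet i).ncard : ℝ) else 0) - (if G.Adj i j then 1 else 0)

def IsTwin {n : ℕ} (G : SimpleGraph (Fin n)) (u v : Fin n) : Prop :=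
  u ≠ v ∧ G.neighborSet u \ {v} = G.neighborSet v \ {u}

def IsEigenvalue {n : ℕ} (M : Matrix (Fin n) (Fin n) ℝ) (μ : ℝ) : Prop :=
  ∃ x : Fin n → ℝ, x ≠ 0 ∧ M.mulVec x = μ • x

def HasSimpleSpectrum {n : ℕ} (M : Matrix (Fin n) (Fin n) ℝ) : Prop :=
  ∃ μ : Fin n → ℝ, Function.Injective μ ∧ ∀ i, IsEigenvalue M (μ i)

def Controllable {n : ℕ} (M : Matrix (Fin n) (Fin n) ℝ) (b : Fin n → ℝ) : Prop :=
  Submodule.span ℝ (Set.range fun k : Fin n => (M ^ (k : ℕ)).mulVec b) = ⊤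

def StronglyUncontrollable {n : ℕ} (G : SimpleGraph (Fin n)) : Prop :=
  G.Connected ∧ HasSimpleSpectrum (lap G) ∧
    ∀ b : Fin n → ℝ, (∀ i, b i = 0 ∨ b i = 1) → ¬ Controllable (lap G) b

def Pmat {n k : ℕ} (c : Fin n → Fin k) : Matrix (Fin n) (Fin k) ℝ :=
  Matrix.of fun i j => if c i = j then 1 else 0

def IsAEP {n k : ℕ} (G : SimpleGraph (Fin n)) (c : Fin n → Fin k) : Prop :=
  ∀ i j : Fin k, i ≠ j → ∀ x y : Fin n, c x = i → c y = i →
    (G.neighborSet x ∩ {z | c z = j}).ncard = (G.neighborSet y ∩ {z | c z = j}).ncard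

noncomputable def quotLap {n k : ℕ} (G : SimpleGraph (Fin n)) (c : Fin n → Fin k) :
    Matrix (Fin k) (Fin k) ℝ :=
  ((Pmat c)ᵀ * Pmat c)⁻¹ * (Pmat c)ᵀ * lap G * Pmat c

def IsQuotAEP {k m : ℕ} (Lq : Matrix (Fin k) (Fin k) ℝ) (r : Fin k → Fin m) : Prop :=
  ∀ a b : Fin m, a ≠ b → ∀ C C' : Fin k, r C = a → r C' = a →
    ∑ C'' ∈ Finset.univ.filter (fun C'' => r C'' = b), Lq C C'' =
      ∑ C'' ∈ Finset.univ.filter (fun C'' => r C'' = b), Lq C' C''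

def IsGraphAut {n : ℕ} (G : SimpleGraph (Fin n)) (σ : Equiv.Perm (Fin n)) : Prop :=
  ∀ x y, G.Adj x y ↔ G.Adj (σ x) (σ y)

def joinOne {n : ℕ} (G : SimpleGraph (Fin n)) : SimpleGraph (Fin (n + 1)) where
  Adj x y := x ≠ y ∧ ((x : ℕ) = n ∨ (y : ℕ) = n ∨
    ∃ (hx : (x : ℕ) < n) (hy : (y : ℕ) < n), G.Adj ⟨x, hx⟩ ⟨y, hy⟩)
  symm := by
    refine ⟨?_⟩
    rintro x y ⟨hxy, h⟩
    refine ⟨hxy.symm, ?_⟩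
    rcases h with h | h | ⟨hx, hy, h⟩
    exacts [Or.inr (Or.inl h), Or.inl h, Or.inr (Or.inr ⟨hy, hx, h.symm⟩)]
  loopless := ⟨fun x h => h.1 rfl⟩

def joinTwo {n : ℕ} (G : SimpleGraph (Fin n)) : SimpleGraph (Fin (n + 2)) where
  Adj x y := x ≠ y ∧ (((x : ℕ) < n ∧ n ≤ (y : ℕ)) ∨ ((y : ℕ) < n ∧ n ≤ (x : ℕ)) ∨
    ∃ (hx : (x : ℕ) < n) (hy : (y : ℕ) < n), G.Adj ⟨x, hx⟩ ⟨y, hy⟩)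
  symm := by
    refine ⟨?_⟩
    rintro x y ⟨hxy, h⟩
    refine ⟨hxy.symm, ?_⟩
    rcases h with h | h | ⟨hx, hy, h⟩
    exacts [Or.inr (Or.inl h), Or.inl h, Or.inr (Or.inr ⟨hy, hx, h.symm⟩)]
  loopless := ⟨fun x h => h.1 rfl⟩

def addPendant {n : ℕ} (G : SimpleGraph (Fin n)) (v : Fin n) : SimpleGraph (Fin (n + 1)) where
  Adj x y := ((x : ℕ) = n ∧ (y : ℕ) = (v : ℕ)) ∨ ((y : ℕ) = n ∧ (x : ℕ) = (v : ℕ)) ∨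
    ∃ (hx : (x : ℕ) < n) (hy : (y : ℕ) < n), G.Adj ⟨x, hx⟩ ⟨y, hy⟩
  symm := by
    refine ⟨?_⟩
    rintro x y (h | h | ⟨hx, hy, h⟩)
    exacts [Or.inr (Or.inl h), Or.inl h, Or.inr (Or.inr ⟨hy, hx, h.symm⟩)]
  loopless := by
    refine ⟨?_⟩
    intro x h
    have hv := v.isLt
    rcases h with ⟨h1, h2⟩ | ⟨h1, h2⟩ | ⟨hx, hy, h⟩
    · omega
    · omega
    · exact G.loopless.irrefl _ h

theorem aux_PtP {n k : ℕ} (c : Fin n → Fin k) :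
    (Pmat c)ᵀ * Pmat c = Matrix.diagonal (fun j => (({x | c x = j}.ncard : ℕ) : ℝ)) := by
  ext i j
  rw [Matrix.mul_apply, Matrix.diagonal_apply]
  simp only [Pmat, Matrix.transpose_apply, Matrix.of_apply]
  by_cases h : i = j
  · subst h
    rw [Set.ncard_eq_toFinset_card']
    simp [← ite_and]
  · rw [if_neg h]
    refine Finset.sum_eq_zero fun x _ => ?_
    by_cases h1 : c x = i
    · rw [if_neg (fun h2 => h (h1.symm.trans h2)), mul_zero]
    · rw [if_neg h1, zero_mul]

theorem aux_lap_symm {n : ℕ} (G : SimpleGraph (Fin n)) : (lap G)ᵀ = lap G := by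
  ext i j
  simp only [lap, Matrix.transpose_apply, Matrix.of_apply]
  by_cases h : i = j
  · subst h; rfl
  · rw [if_neg h, if_neg (Ne.symm h)]
    simp only [G.adj_comm]

theorem aux_lap_one {n : ℕ} (G : SimpleGraph (Fin n)) : (lap G) *ᵥ (fun _ => 1) = 0 := by
  ext i
  simp only [lap, Matrix.mulVec, dotProduct, Matrix.of_apply, mul_one, Pi.zero_apply]
  rw [Finset.sum_sub_distrib, Set.ncard_eq_toFinset_card']
  simp only [Finset.sum_ite_eq, Finset.mem_univ, if_true, Finset.sum_boole]
  rw [sub_eq_zero]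
  congr 2
  ext y
  simp

theorem aux_P_one {n k : ℕ} (c : Fin n → Fin k) : (Pmat c) *ᵥ (fun _ => 1) = fun _ => 1 := by
  ext i
  simp [Pmat, Matrix.mulVec, dotProduct]

theorem aux_quot_one {n k : ℕ} (G : SimpleGraph (Fin n)) (c : Fin n → Fin k) (i : Fin k) :
    ∑ j, quotLap G c i j = 0 := by
  have h : quotLap G c *ᵥ (fun _ => 1) = 0 := by
    unfold quotLap
    rw [← Matrix.mulVec_mulVec, aux_P_one, ← Matrix.mulVec_mulVec, aux_lap_one, Matrix.mulVec_zero]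
  have := congrFun h i
  simpa [Matrix.mulVec, dotProduct] using this

theorem aux_pos {n k : ℕ} (c : Fin n → Fin k) (hc : Function.Surjective c) (j : Fin k) :
    (({x | c x = j}.ncard : ℕ) : ℝ) ≠ 0 := by
  obtain ⟨x, hx⟩ := hc j
  have : ({x | c x = j}).ncard ≠ 0 := Set.ncard_ne_zero_of_mem (a := x) hx
  exact_mod_cast this

theorem aux_symm {n k : ℕ} (G : SimpleGraph (Fin n)) (c : Fin n → Fin k)
    (hc : Function.Surjective c) (i j : Fin k) :
    (({x | c x = i}.ncard : ℕ) : ℝ) * quotLap G c i j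
      = (({x | c x = j}.ncard : ℕ) : ℝ) * quotLap G c j i := by
  have h1 : ((Pmat c)ᵀ * Pmat c) * quotLap G c = (Pmat c)ᵀ * lap G * Pmat c := by
    unfold quotLap
    have hu : IsUnit ((Pmat c)ᵀ * Pmat c).det := by
      rw [aux_PtP, Matrix.det_diagonal, isUnit_iff_ne_zero]
      exact Finset.prod_ne_zero_iff.mpr fun j _ => aux_pos c hc j
    rw [Matrix.mul_assoc (_⁻¹ * _), Matrix.mul_assoc (_⁻¹), Matrix.mul_nonsing_inv_cancel_left _ _ hu,
      Matrix.mul_assoc]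
  have h2 : ((Pmat c)ᵀ * lap G * Pmat c)ᵀ = (Pmat c)ᵀ * lap G * Pmat c := by
    simp only [Matrix.transpose_mul, Matrix.transpose_transpose, aux_lap_symm, Matrix.mul_assoc]
  rw [← h1, aux_PtP] at h2
  have := congrFun (congrFun h2 j) i
  simpa [Matrix.transpose_apply, Matrix.diagonal_mul] using this

theorem aux_row {n k m : ℕ} (G : SimpleGraph (Fin n)) (c : Fin n → Fin k) (r : Fin k → Fin m)
    (hρ : IsQuotAEP (quotLap G c) r) (b : Fin m) (C C' : Fin k) (h : r C = r C') :
    ∑ D ∈ Finset.univ.filter (fun D => r D = b), quotLap G c C D =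
      ∑ D ∈ Finset.univ.filter (fun D => r D = b), quotLap G c C' D := by
  by_cases hb : r C = b
  · have key : ∀ E : Fin k, ∑ a, ∑ D ∈ Finset.univ.filter (fun D => r D = a), quotLap G c E D = 0 := by
      intro E
      rw [Finset.sum_fiberwise]
      exact aux_quot_one G c E
    have e1 := key C
    have e2 := key C'
    rw [← Finset.add_sum_erase _ _ (Finset.mem_univ b)] at e1 e2
    have e3 : ∑ a ∈ Finset.univ.erase b, ∑ D ∈ Finset.univ.filter (fun D => r D = a), quotLap G c C D
        = ∑ a ∈ Finset.univ.erase b, ∑ D ∈ Finset.univ.filter (fun D => r D = a), quotLap G c C' D := by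
      refine Finset.sum_congr rfl fun a ha => ?_
      exact hρ b a (Finset.ne_of_mem_erase ha).symm C C' hb (h ▸ hb)
    linarith
  · exact hρ (r C) b hb C C' rfl h.symm

theorem aux_col {n k m : ℕ} (G : SimpleGraph (Fin n)) (c : Fin n → Fin k)
    (hc : Function.Surjective c) (r : Fin k → Fin m)
    (hρ : IsQuotAEP (quotLap G c) r)
    (hreg : ∀ j j' : Fin k, r j = r j' → {x | c x = j}.ncard = {x | c x = j'}.ncard)
    (b : Fin m) (C C' : Fin k) (h : r C = r C') :
    ∑ D ∈ Finset.univ.filter (fun D => r D = b), quotLap G c D C =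
      ∑ D ∈ Finset.univ.filter (fun D => r D = b), quotLap G c D C' := by
  by_cases hne : ∃ B, r B = b
  · obtain ⟨B, hB⟩ := hne
    have key : ∀ E : Fin k, (({x | c x = B}.ncard : ℕ) : ℝ) *
        ∑ D ∈ Finset.univ.filter (fun D => r D = b), quotLap G c D E
        = (({x | c x = E}.ncard : ℕ) : ℝ) *
        ∑ D ∈ Finset.univ.filter (fun D => r D = b), quotLap G c E D := by
      intro E
      rw [Finset.mul_sum, Finset.mul_sum]
      refine Finset.sum_congr rfl fun D hD => ?_
      rw [hreg B D (hB.trans (Finset.mem_filter.mp hD).2.symm)]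
      exact aux_symm G c hc D E
    apply mul_left_cancel₀ (aux_pos c hc B)
    rw [key, key, hreg C C' h, aux_row G c r hρ b C C' h]
  · have : ∀ D, r D ≠ b := fun D hD => hne ⟨D, hD⟩
    simp [this]

theorem stmt11 {n k m : ℕ} (G : SimpleGraph (Fin n))
    (c : Fin n → Fin k) (hcsurj : Function.Surjective c) (hπ : IsAEP G c)
    (r : Fin k → Fin m) (hrsurj : Function.Surjective r)
    (hρ : IsQuotAEP (quotLap G c) r)
    (hreg : ∀ j j' : Fin k, r j = r j' → {x | c x = j}.ncard = {x | c x = j'}.ncard)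
    (x : Fin k → ℝ) (hx : (Pmat r)ᵀ.mulVec x = 0) :
    (Pmat r)ᵀ.mulVec ((quotLap G c).mulVec x) = 0 := by
  have hx' : ∀ a : Fin m, ∑ D ∈ Finset.univ.filter (fun D => r D = a), x D = 0 := by
    intro a
    have := congrFun hx a
    simpa [Pmat, Matrix.mulVec, dotProduct, Finset.sum_filter] using this
  ext b
  have e : ((Pmat r)ᵀ.mulVec ((quotLap G c).mulVec x)) b
      = ∑ C, (∑ D ∈ Finset.univ.filter (fun D => r D = b), quotLap G c D C) * x C := by
    simp only [Pmat, Matrix.mulVec, dotProduct, Matrix.transpose_apply, Matrix.of_apply, ite_mul,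
      one_mul, zero_mul]
    rw [← Finset.sum_filter, Finset.sum_comm]
    simp only [Finset.sum_mul]
  rw [e, ← Finset.sum_fiberwise (g := r), Pi.zero_apply]
  refine Finset.sum_eq_zero fun a _ => ?_
  obtain ⟨A, hA⟩ := hrsurj a
  rw [← mul_zero (∑ D ∈ Finset.univ.filter (fun D => r D = b), quotLap G c D A), ← hx' a,
    Finset.mul_sum]
  refine Finset.sum_congr rfl fun C hC => ?_
  rw [aux_col G c hcsurj r hρ hreg b C A ((Finset.mem_filter.mp hC).2.trans hA.symm)]
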